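/- arXiv:1711.09028 — 2 statements merged into one kernel-verified Lean document; each statement's English description precedes it below -/
import Mathlib

section
/- Let (M,M') be a matroid perspective on a finite ground set E, and call a subset X ⊆ E feasible if X is independent in M and spanning in M'. Then: (i) the collection ℱ of feasible sets is nonempty; (ii) ℱ satisfies the delta-matroid symmetric exchange axiom: for all X, Y ∈ ℱ and every x ∈ X △ Y (symmetric difference), there exists y ∈ X △ Y (possibly y = x) such that X △ {x,y} ∈ ℱ; (iii) ℱ is saturated: whenever X ⊆ Y ⊆ Z with X ∈ ℱ and Z ∈ ℱ, also Y ∈ ℱ. -/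
open Finset

/-- A finite "pre-matroid": a finite ground set together with a rank function. -/
structure PreMatroid (α : Type*) where
  E : Finset α
  rk : Finset α → ℕ

namespace PreMatroid

variable {α : Type*} [DecidableEq α] {R : Type*} [CommRing R]

/-- The matroid axioms: `rk X ≤ |X|`, monotonicity, and submodularity
(all on subsets of the ground set). -/
def IsMatroid (M : PreMatroid α) : Prop :=
  (∀ X, X ⊆ M.E → M.rk X ≤ X.card) ∧
  (∀ X Y, X ⊆ Y → Y ⊆ M.E → M.rk X ≤ M.rk Y) ∧
  (∀ X Y, X ⊆ M.E → Y ⊆ M.E → M.rk (X ∪ Y) + M.rk (X ∩ Y) ≤ M.rk X + M.rk Y)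

/-- The restriction `M|A`: ground set `A`, rank function the restriction of `rk`. -/
def restrict (M : PreMatroid α) (A : Finset α) : PreMatroid α :=
  ⟨A, M.rk⟩

/-- The contraction `M/A`: ground set `E ∖ A`, rank function `B ↦ rk (B ∪ A) − rk A`. -/
def contract (M : PreMatroid α) (A : Finset α) : PreMatroid α :=
  ⟨M.E \ A, fun B => M.rk (B ∪ A) - M.rk A⟩

/-- The deletion `M∖A ≔ M|(E∖A)`. -/
def delete (M : PreMatroid α) (A : Finset α) : PreMatroid α :=
  M.restrict (M.E \ A)

/-- The rank `rk(M) = rk(E(M))` of a matroid. -/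
def rank (M : PreMatroid α) : ℕ := M.rk M.E

/-- The Tutte polynomial `𝔗_M(x,y) = Σ_{A ⊆ E} (x−1)^{rk(M)−rk(A)} (y−1)^{|A|−rk(A)}`,
evaluated at elements of a commutative ring. -/
def tutte (M : PreMatroid α) (x y : R) : R :=
  ∑ A ∈ M.E.powerset, (x - 1) ^ (M.rank - M.rk A) * (y - 1) ^ (A.card - M.rk A)

end PreMatroid

namespace PreMatroid

/-- `X` is independent in `M` if `rk(X) = |X|`. -/
def Indep {α : Type*} (M : PreMatroid α) (X : Finset α) : Prop :=
  M.rk X = X.card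

/-- `X` is spanning in `M` if `rk(X) = rk(E(M))`. -/
def Spanning {α : Type*} (M : PreMatroid α) (X : Finset α) : Prop :=
  M.rk X = M.rk M.E

/-- `(M, M')` is a matroid perspective: `M` and `M'` are matroids on the same ground
set and `rk_M(B) − rk_M(A) ≥ rk_{M'}(B) − rk_{M'}(A)` for all `A ⊆ B ⊆ E`. -/
def IsPerspective {α : Type*} [DecidableEq α] (M M' : PreMatroid α) : Prop :=
  M.IsMatroid ∧ M'.IsMatroid ∧ M'.E = M.E ∧
    ∀ A B : Finset α, A ⊆ B → B ⊆ M.E →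
      ((M'.rk B : ℤ) - M'.rk A) ≤ (M.rk B : ℤ) - M.rk A

/-- `X ⊆ E` is feasible for the perspective `(M, M')` if it is independent in `M`
and spanning in `M'`. -/
def Feasible {α : Type*} (M M' : PreMatroid α) (X : Finset α) : Prop :=
  X ⊆ M.E ∧ Indep M X ∧ Spanning M' X

theorem aux_unit {α : Type*} [DecidableEq α] {M : PreMatroid α} (h : M.IsMatroid)
    (A B : Finset α) (hAB : A ⊆ B) (hB : B ⊆ M.E) :
    M.rk B ≤ M.rk A + (B \ A).card := by
  have h1 := h.2.2 A (B \ A) (hAB.trans hB) (sdiff_subset.trans hB)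
  have h2 := h.1 (B \ A) (sdiff_subset.trans hB)
  rw [Finset.union_sdiff_of_subset hAB] at h1
  omega

theorem aux_indep {α : Type*} [DecidableEq α] {M : PreMatroid α} (h : M.IsMatroid)
    (A B : Finset α) (hAB : A ⊆ B) (hB : B ⊆ M.E) (hi : M.rk B = B.card) :
    M.rk A = A.card := by
  have h1 := aux_unit h A B hAB hB
  have h2 := h.1 A (hAB.trans hB)
  have h3 := Finset.card_sdiff_add_card_eq_card hAB
  omega

theorem aux_closure {α : Type*} [DecidableEq α] {M : PreMatroid α} (h : M.IsMatroid)
    (A : Finset α) (hA : A ⊆ M.E) (B : Finset α) (hB : B ⊆ M.E)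
    (hy : ∀ y ∈ B, M.rk (insert y A) ≤ M.rk A) : M.rk (A ∪ B) ≤ M.rk A := by
  induction B using Finset.induction_on with
  | empty => simp
  | insert y B hyB ih =>
    have hyE : y ∈ M.E := hB (mem_insert_self _ _)
    have hBE : B ⊆ M.E := (subset_insert _ _).trans hB
    have i1 := ih hBE (fun z hz => hy z (mem_insert_of_mem hz))
    have i2 := hy y (mem_insert_self _ _)
    have hi : insert y A ⊆ M.E := insert_subset hyE hA
    have h1 := h.2.2 (A ∪ B) (insert y A) (union_subset hA hBE) hi
    have e : (A ∪ B) ∪ insert y A = A ∪ insert y B := by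
      ext z; simp; tauto
    rw [e] at h1
    have h2 := h.2.1 A ((A ∪ B) ∩ insert y A)
      (subset_inter subset_union_left (subset_insert _ _)) (inter_subset_right.trans hi)
    omega

theorem aux_coloop {α : Type*} [DecidableEq α] {M : PreMatroid α} (h : M.IsMatroid)
    (S : Finset α) (hS : S ⊆ M.E) (D : Finset α) 
    (hy : ∀ y ∈ D, M.rk (S.erase y) < M.rk S) : M.rk (S \ D) + D.card ≤ M.rk S := by
  induction D using Finset.induction_on with
  | empty => simp
  | insert y D hyD ih =>
    have i1 := ih (fun z hz => hy z (mem_insert_of_mem hz))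
    have i2 := hy y (mem_insert_self _ _)
    have h1 := h.2.2 (S \ D) (S.erase y) (sdiff_subset.trans hS) ((erase_subset _ _).trans hS)
    have e1 : (S \ D) ∪ S.erase y = S := by
      ext z
      by_cases hz : z = y
      · subst hz; simp [hyD]
      · simp [hz]; tauto
    have e2 : (S \ D) ∩ S.erase y = S \ insert y D := by
      ext z; simp; tauto
    rw [e1, e2] at h1
    rw [card_insert_of_notMem hyD]
    omega

theorem aux_basis {α : Type*} [DecidableEq α] {M : PreMatroid α} (h : M.IsMatroid) :
    ∃ B, B ⊆ M.E ∧ M.rk B = B.card ∧ M.rk M.E ≤ M.rk B := by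
  classical
  have h0 : M.rk ∅ = 0 := by simpa using h.1 ∅ (empty_subset _)
  obtain ⟨B, hB, hmax⟩ := Finset.exists_max_image
    (M.E.powerset.filter (fun B => M.rk B = B.card)) Finset.card ⟨∅, by simp [h0]⟩
  simp only [mem_filter, mem_powerset] at hB hmax
  refine ⟨B, hB.1, hB.2, ?_⟩
  have := aux_closure h B hB.1 M.E subset_rfl ?_
  · rwa [union_eq_right.2 hB.1] at this
  intro y hy
  by_contra hc
  have hi := insert_subset hy hB.1
  have h1 := h.1 _ hi
  have h2 := hB.2
  have h3 := card_insert_le y B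
  have := hmax (insert y B) ⟨hi, by omega⟩
  omega

/-- The feasible sets of a matroid perspective form a saturated delta-matroid:
they are nonempty, satisfy the symmetric exchange axiom, and are saturated. -/
theorem perspective_feasible_saturated_deltaMatroid
    {α : Type*} [DecidableEq α] (M M' : PreMatroid α) (h : IsPerspective M M') :
    (∃ X : Finset α, Feasible M M' X) ∧
    (∀ X Y : Finset α, Feasible M M' X → Feasible M M' Y →
      ∀ x ∈ (X \ Y) ∪ (Y \ X), ∃ y ∈ (X \ Y) ∪ (Y \ X),
        Feasible M M' ((X \ ({x, y} : Finset α)) ∪ (({x, y} : Finset α) \ X))) ∧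
    (∀ X Y Z : Finset α, X ⊆ Y → Y ⊆ Z →
      Feasible M M' X → Feasible M M' Z → Feasible M M' Y) := by
  obtain ⟨hM, hM', hE, hp⟩ := h
  refine ⟨?_, ?_, ?_⟩
  · obtain ⟨B, hB, hi, hs⟩ := aux_basis hM
    refine ⟨B, hB, hi, ?_⟩
    have h1 := hp B M.E hB subset_rfl
    have h2 := hM'.2.1 B M.E hB hE.ge
    unfold Spanning
    rw [hE]; omega
  · rintro X Y ⟨hXE, hXi, hXs⟩ ⟨hYE, hYi, hYs⟩ x hx
    unfold Indep at hXi hYi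
    unfold Spanning at hXs hYs
    rw [hE] at hXs hYs
    rcases mem_union.1 hx with hx' | hx'
    · obtain ⟨hxX, hxY⟩ := mem_sdiff.1 hx'
      have hAE : X.erase x ⊆ M.E := (erase_subset _ _).trans hXE
      have hAi := aux_indep hM _ X (erase_subset x X) hXE hXi
      have hAm := hM'.2.1 _ X (erase_subset x X) (hE ▸ hXE)
      by_cases hs : M'.rk (X.erase x) = M'.rk M.E
      · refine ⟨x, hx, ?_⟩
        have e : (X \ ({x, x} : Finset α)) ∪ (({x, x} : Finset α) \ X) = X.erase x := by
          ext z; simp; grind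
        rw [e]
        exact ⟨hAE, hAi, by unfold Spanning; rw [hE]; exact hs⟩
      · have : ∃ y ∈ Y, M'.rk (X.erase x) < M'.rk (insert y (X.erase x)) := by
          by_contra! hc
          have h1 := aux_closure hM' (X.erase x) (hE ▸ hAE) Y (hE ▸ hYE) hc
          have h2 := hM'.2.1 Y (X.erase x ∪ Y) subset_union_right
            (hE ▸ union_subset hAE hYE)
          omega
        obtain ⟨y, hyY, hy⟩ := this
        have hyA : y ∉ X.erase x := by
          intro hc
          rw [insert_eq_of_mem hc] at hy
          omega
        have hyx : y ≠ x := fun e => hxY (e ▸ hyY)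
        have hyX : y ∉ X := fun e => hyA (mem_erase.2 ⟨hyx, e⟩)
        refine ⟨y, mem_union_right _ (mem_sdiff.2 ⟨hyY, hyX⟩), ?_⟩
        have e : (X \ ({x, y} : Finset α)) ∪ (({x, y} : Finset α) \ X)
            = insert y (X.erase x) := by
          ext z; simp; grind
        rw [e]
        have hIE : insert y (X.erase x) ⊆ M.E := insert_subset (hYE hyY) hAE
        have h1 := hp _ _ (subset_insert y (X.erase x)) hIE
        have h2 := hM.1 _ hIE
        have h3 := card_insert_of_notMem hyA
        have h4 := aux_unit hM' _ X (erase_subset x X) (hE ▸ hXE)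
        have h5 := Finset.card_sdiff_add_card_eq_card (erase_subset x X)
        have h6 := card_erase_add_one hxX
        have h7 := hM'.2.1 _ M.E hIE hE.ge
        refine ⟨hIE, ?_, ?_⟩
        · unfold Indep; omega
        · unfold Spanning; rw [hE]; omega
    · obtain ⟨hxY, hxX⟩ := mem_sdiff.1 hx'
      have hIE : insert x X ⊆ M.E := insert_subset (hYE hxY) hXE
      have hm := hM'.2.1 _ _ (subset_insert x X) (hE ▸ hIE)
      have hm2 := hM'.2.1 _ M.E hIE hE.ge
      have hc := card_insert_of_notMem hxX
      have hle := hM.1 _ hIE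
      have hm3 := hM.2.1 _ _ (subset_insert x X) hIE
      by_cases hi : M.rk (insert x X) = (insert x X).card
      · refine ⟨x, hx, ?_⟩
        have e : (X \ ({x, x} : Finset α)) ∪ (({x, x} : Finset α) \ X) = insert x X := by
          ext z; simp; grind
        rw [e]
        exact ⟨hIE, hi, by unfold Spanning; rw [hE]; omega⟩
      · have : ∃ y ∈ X \ Y, M.rk (insert x X) ≤ M.rk ((insert x X).erase y) := by
          by_contra! hcon
          have h1 := aux_coloop hM (insert x X) hIE (X \ Y) hcon
          have e : insert x X \ (X \ Y) = insert x (X ∩ Y) := by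
            ext z; simp; grind
          rw [e] at h1
          have h2 := aux_indep hM (insert x (X ∩ Y)) Y
            (insert_subset hxY inter_subset_right) hYE hYi
          have h3 : (insert x (X ∩ Y)).card = (X ∩ Y).card + 1 :=
            card_insert_of_notMem (fun hh => hxX (mem_inter.1 hh).1)
          have h4 := Finset.card_sdiff_add_card_inter X Y
          omega
        obtain ⟨y, hyD, hy⟩ := this
        obtain ⟨hyX, hyY⟩ := mem_sdiff.1 hyD
        have hyx : y ≠ x := fun e => hxX (e ▸ hyX)
        refine ⟨y, mem_union_left _ hyD, ?_⟩
        have e : (X \ ({x, y} : Finset α)) ∪ (({x, y} : Finset α) \ X)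
            = (insert x X).erase y := by
          ext z; simp; grind
        rw [e]
        have hJE := (erase_subset y (insert x X)).trans hIE
        have h1 := hp _ _ (erase_subset y (insert x X)) hIE
        have h2 := hM.1 _ hJE
        have h3 := card_erase_add_one (mem_insert_of_mem (b := x) hyX)
        have h7 := hM'.2.1 _ M.E hJE hE.ge
        refine ⟨hJE, ?_, ?_⟩
        · unfold Indep; omega
        · unfold Spanning; rw [hE]; omega
  · rintro X Y Z hXY hYZ ⟨_, _, hXs⟩ ⟨hZE, hZi, _⟩
    have hYE := hYZ.trans hZE
    refine ⟨hYE, aux_indep hM Y Z hYZ hZE hZi, ?_⟩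
    unfold Spanning at *
    have h1 := hM'.2.1 X Y hXY (hE ▸ hYE)
    have h2 := hM'.2.1 Y M'.E (hE ▸ hYE) subset_rfl
    omega

end PreMatroid
end

section
/- Let M be a finite matroid on ground set E, let R be a commutative ring, let m1, m2 : 2^E → R be functions, and let a,b,c,d ∈ R. Writing m1·m2 for the pointwise product A ↦ m1(A)·m2(A), the following convolution formula holds: 𝔐_{M, m1·m2}(1−ab, 1−cd) = Σ_{A⊆E} a^{rk(M)−rk(A)} · d^{|A|−rk(A)} · 𝔐_{(M,m1)|A}(1−a, 1−c) · 𝔐_{(M,m2)/A}(1−b, 1−d). -/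
open Finset

namespace PreMatroid

/-- The arithmetic Tutte polynomial of a pair `(M, m)` of a matroid and a
multiplicity function `m : 2^E → R`:
`𝔐_{M,m}(x,y) = Σ_{A⊆E} m(A) (x−1)^{rk M − rk A} (y−1)^{|A|−rk A}`. -/
def arithTutte {α : Type*} (M : PreMatroid α) {R : Type*} [CommRing R]
    (m : Finset α → R) (x y : R) : R :=
  ∑ A ∈ M.E.powerset, m A * (x - 1) ^ (M.rank - M.rk A) * (y - 1) ^ (A.card - M.rk A)

theorem aux_alt {α : Type*} [DecidableEq α] {R : Type*} [CommRing R] (B C : Finset α) (h : B ⊆ C) :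
    ∑ A ∈ C.powerset with B ⊆ A, (-1 : R) ^ A.card = if B = C then (-1) ^ C.card else 0 := by
  have h1 : ∑ A ∈ C.powerset with B ⊆ A, (-1 : R) ^ A.card
      = ∑ D ∈ (C \ B).powerset, (-1 : R) ^ B.card * (-1) ^ D.card := by
    refine Finset.sum_bij' (fun A _ => A \ B) (fun D _ => D ∪ B) ?_ ?_ ?_ ?_ ?_
    · intro A hA
      simp only [mem_filter, mem_powerset] at hA ⊢
      exact sdiff_subset_sdiff hA.1 (le_refl _)
    · intro D hD
      simp only [mem_filter, mem_powerset] at hD ⊢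
      exact ⟨union_subset (hD.trans sdiff_subset) h, subset_union_right⟩
    · intro A hA
      simp only [mem_filter, mem_powerset] at hA
      exact sdiff_union_of_subset hA.2
    · intro D hD
      simp only [mem_powerset] at hD
      exact union_sdiff_cancel_right (disjoint_sdiff.mono_right hD).symm
    · intro A hA
      simp only [mem_filter, mem_powerset] at hA
      rw [← pow_add, add_comm, card_sdiff_add_card_eq_card hA.2]
  have h2 : ∑ D ∈ (C \ B).powerset, (-1 : R) ^ D.card = if C \ B = ∅ then 1 else 0 := by
    have := congrArg (Int.cast : ℤ → R) (Finset.sum_powerset_neg_one_pow_card (x := C \ B))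
    push_cast at this
    exact this
  rw [h1, ← mul_sum, h2]
  by_cases hBC : B = C
  · subst hBC; simp
  · rw [if_neg hBC, if_neg, mul_zero]
    intro h3
    exact hBC (h.antisymm (sdiff_eq_empty_iff_subset.1 h3))

theorem aux_sign {R : Type*} [CommRing R] (x y : R) (a b c d : R) (rE rA rB rC nA nB nC nD : ℕ)
    (hBA : rB ≤ rA) (hAC : rA ≤ rC) (hCE : rC ≤ rE) (hA : rA ≤ nA) (hC : rC ≤ nC)
    (hn : nC = nD + nA) (hD : rC ≤ rA + nD) :
    a ^ (rE - rA) * d ^ (nA - rA) * (x * (1 - a - 1) ^ (rA - rB) * (1 - c - 1) ^ (nB - rB)) *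
      (y * (1 - b - 1) ^ (rE - rA - (rC - rA)) * (1 - d - 1) ^ (nD - (rC - rA)))
    = (x * y * a ^ (rE - rB) * (-c) ^ (nB - rB) * (-b) ^ (rE - rC) * d ^ (nC - rC) *
      (-1) ^ (rB + rC + nC)) * (-1) ^ nA := by
  obtain ⟨i, rfl⟩ := Nat.exists_eq_add_of_le hBA
  obtain ⟨j, rfl⟩ := Nat.exists_eq_add_of_le hAC
  obtain ⟨k, rfl⟩ := Nat.exists_eq_add_of_le hCE
  obtain ⟨l, rfl⟩ := Nat.exists_eq_add_of_le hA
  obtain ⟨e, rfl⟩ : ∃ e, nD = j + e := ⟨nD - j, by omega⟩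
  subst hn
  rw [show rB + i + j + k - (rB + i) = j + k by omega, show rB + i + l - (rB + i) = l by omega,
    show rB + i - rB = i by omega, show j + k - (rB + i + j - (rB + i)) = k by omega,
    show j + e - (rB + i + j - (rB + i)) = e by omega, show rB + i + j + k - rB = i + j + k by omega,
    show rB + i + j + k - (rB + i + j) = k by omega,
    show j + e + (rB + i + l) - (rB + i + j) = e + l by omega,
    show 1 - a - 1 = (-1) * a by ring, show 1 - b - 1 = -b by ring, show 1 - c - 1 = -c by ring,
    show 1 - d - 1 = (-1) * d by ring, mul_pow, mul_pow]
  have hs : (-1 : R) ^ (rB + (rB + i + j) + (j + e + (rB + i + l))) * (-1) ^ (rB + i + l)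
      = (-1) ^ i * (-1) ^ e := by
    rw [← pow_add, ← pow_add, show rB + (rB + i + j) + (j + e + (rB + i + l)) + (rB + i + l)
      = 2 * (rB + rB + j + i + l) + (i + e) by ring, pow_add, pow_mul]
    simp
  rw [mul_assoc _ ((-1 : R) ^ _) ((-1 : R) ^ _), hs]
  ring

/-- The convolution formula for the arithmetic Tutte polynomial of a pointwise
product of multiplicity functions. -/
theorem arithTutte_product_convolution {α : Type*} [DecidableEq α] {R : Type*} [CommRing R]
    (M : PreMatroid α) (hM : M.IsMatroid) (m1 m2 : Finset α → R) (a b c d : R) :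
    arithTutte M (fun A => m1 A * m2 A) (1 - a * b) (1 - c * d) =
      ∑ A ∈ M.E.powerset,
        a ^ (M.rank - M.rk A) * d ^ (A.card - M.rk A) *
          arithTutte (M.restrict A) m1 (1 - a) (1 - c) *
          arithTutte (M.contract A) (fun B => m2 (B ∪ A)) (1 - b) (1 - d) := by
  obtain ⟨h1, h2, h3⟩ := hM
  let F : Finset α → Finset α → R := fun B C =>
    m1 B * m2 C * a ^ (M.rk M.E - M.rk B) * (-c) ^ (B.card - M.rk B) *
      (-b) ^ (M.rk M.E - M.rk C) * d ^ (C.card - M.rk C) * (-1) ^ (M.rk B + M.rk C + C.card)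
  have key : ∀ A ∈ M.E.powerset,
      a ^ (M.rank - M.rk A) * d ^ (A.card - M.rk A) *
          arithTutte (M.restrict A) m1 (1 - a) (1 - c) *
          arithTutte (M.contract A) (fun B => m2 (B ∪ A)) (1 - b) (1 - d) =
      ∑ C ∈ M.E.powerset with A ⊆ C, ∑ B ∈ A.powerset, F B C * (-1) ^ A.card := by
    intro A hA
    rw [mem_powerset] at hA
    unfold arithTutte restrict contract rank
    simp only [sdiff_union_of_subset hA]
    rw [mul_sum, mul_sum]
    refine Finset.sum_bij' (fun D _ => D ∪ A) (fun C _ => C \ A) ?_ ?_ ?_ ?_ ?_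
    · intro D hD
      simp only [mem_filter, mem_powerset] at hD ⊢
      exact ⟨union_subset (hD.trans sdiff_subset) hA, subset_union_right⟩
    · intro C hC
      simp only [mem_filter, mem_powerset] at hC ⊢
      exact sdiff_subset_sdiff hC.1 (le_refl _)
    · intro D hD
      simp only [mem_powerset] at hD
      exact union_sdiff_cancel_right (disjoint_sdiff.mono_right hD).symm
    · intro C hC
      simp only [mem_filter, mem_powerset] at hC
      exact sdiff_union_of_subset hC.2
    · intro D hD
      simp only [mem_powerset] at hD
      have hDE : D ⊆ M.E := hD.trans sdiff_subset
      have hDA : D ∪ A ⊆ M.E := union_subset hDE hA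
      rw [sum_mul]
      refine sum_congr rfl fun B hB => ?_
      rw [mem_powerset] at hB
      refine aux_sign _ _ a b c d _ _ _ _ _ _ _ _ (h2 _ _ hB hA) (h2 _ _ subset_union_right hDA)
        (h2 _ _ hDA (le_refl _)) (h1 _ hA) (h1 _ hDA)
        (card_union_of_disjoint (disjoint_sdiff.mono_right hD).symm) ?_
      have := h3 D A hDE hA
      have := h1 D hDE
      omega
  rw [sum_congr rfl key]
  have e1 : ∑ A ∈ M.E.powerset, ∑ C ∈ M.E.powerset with A ⊆ C, ∑ B ∈ A.powerset,
      F B C * (-1) ^ A.card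
      = ∑ C ∈ M.E.powerset, ∑ A ∈ C.powerset, ∑ B ∈ A.powerset, F B C * (-1) ^ A.card := by
    refine Finset.sum_comm' fun A C => ?_
    simp only [mem_filter, mem_powerset]
    exact ⟨fun h => ⟨h.2.2, h.2.1⟩, fun h => ⟨h.1.trans h.2, h.2, h.1⟩⟩
  rw [e1]
  unfold arithTutte
  refine sum_congr rfl fun C hC => ?_
  rw [mem_powerset] at hC
  have e2 : ∑ A ∈ C.powerset, ∑ B ∈ A.powerset, F B C * (-1) ^ A.card
      = ∑ B ∈ C.powerset, ∑ A ∈ C.powerset with B ⊆ A, F B C * (-1) ^ A.card := by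
    refine Finset.sum_comm' fun A B => ?_
    simp only [mem_filter, mem_powerset]
    exact ⟨fun h => ⟨h, h.2.trans h.1⟩, fun h => h.1⟩
  have e3 : ∀ B ∈ C.powerset, ∑ A ∈ C.powerset with B ⊆ A, F B C * (-1) ^ A.card
      = if B = C then F B C * (-1) ^ C.card else 0 := by
    intro B hB
    rw [← mul_sum, aux_alt B C (mem_powerset.1 hB), mul_ite, mul_zero]
  rw [e2, sum_congr rfl e3, sum_ite_eq' , if_pos (mem_powerset_self C)]
  simp only [F, rank]
  have hs : (-1 : R) ^ (M.rk C + M.rk C + C.card) * (-1) ^ C.card = 1 := by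
    rw [← pow_add, show M.rk C + M.rk C + C.card + C.card = 2 * (M.rk C + C.card) by ring, pow_mul]
    simp
  rw [mul_assoc _ ((-1 : R) ^ _) ((-1 : R) ^ _), hs,
    show 1 - a * b - 1 = a * (-b) by ring, show 1 - c * d - 1 = (-c) * d by ring, mul_pow, mul_pow]
  ring

end PreMatroid
end
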